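/- Let Ω ⊂ ℂⁿ be a bounded convex domain whose boundary is C^{1,ε}-smooth for some ε > 0, and let o ∈ Ω. Suppose (z_k) and (w_m) are sequences in Ω with z_k → x ∈ ∂Ω and w_m → x ∈ ∂Ω (converging to the same boundary point). Then the Gromov products with respect to the Kobayashi distance satisfy lim_{k,m → ∞} (z_k | w_m)_o = ∞. -/

import Mathlib

open Metric Set MeasureTheory Filter Topology

noncomputable section

variable {E : Type*} [NormedAddCommGroup E] [NormedSpace ℂ E]

/-- Distance from `x` to the boundary of `D`. -/
def bdist (D : Set E) (x : E) : ℝ := Metric.infDist x (frontier D)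

/-- Distance from `x` to the boundary of `D` along the complex line `x + ℂ v`. -/
def bdistDir (D : Set E) (x v : E) : ℝ :=
  Metric.infDist x (frontier D ∩ {w | ∃ c : ℂ, w = x + c • v})

/-- The infinitesimal Kobayashi (pseudo-)metric of `D ⊆ E`. -/
def kobMetric (D : Set E) (x v : E) : ℝ :=
  sInf { r : ℝ | ∃ (f : ℂ → E) (ξ : ℂ),
    DifferentiableOn ℂ f (ball (0:ℂ) 1) ∧ MapsTo f (ball (0:ℂ) 1) D ∧
    f 0 = x ∧ ξ • derivWithin f (ball (0:ℂ) 1) 0 = v ∧ r = ‖ξ‖ }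

/-- `σ` is absolutely continuous on `[a,b]`, with a.e. derivative `g`. -/
def IsACWithDeriv (σ g : ℝ → E) (a b : ℝ) : Prop :=
  IntervalIntegrable g volume a b ∧
  ∀ t ∈ Icc a b, σ t = σ a + ∫ s in a..t, g s

/-- The Kobayashi pseudo-distance of `D`, defined via lengths of absolutely
continuous curves (Venturini's description). -/
def kobDist (D : Set E) (x y : E) : ℝ :=
  sInf { r : ℝ | ∃ (a b : ℝ) (σ g : ℝ → E), a ≤ b ∧
    IsACWithDeriv σ g a b ∧ MapsTo σ (Icc a b) D ∧ σ a = x ∧ σ b = y ∧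
    r = ∫ t in a..b, kobMetric D (σ t) (g t) }

/-- Log-type convex domain, with explicit constants `C, ν > 0`. -/
def LogTypeConvexWith (D : Set E) (C ν : ℝ) : Prop :=
  IsOpen D ∧ D.Nonempty ∧ Bornology.IsBounded D ∧ Convex ℝ D ∧ 0 < C ∧ 0 < ν ∧
  ∀ z ∈ D, ∀ v : E, v ≠ 0 →
    bdistDir D z v ≤ C / |Real.log (bdist D z)| ^ (1 + ν)

/-- Log-type convex domain. -/
def LogTypeConvex (D : Set E) : Prop := ∃ C ν : ℝ, LogTypeConvexWith D C ν

/-- A `ℂ`-convex set: every nonempty intersection with a complex affine line is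
connected and simply connected. -/
def CConvex (D : Set E) : Prop :=
  ∀ z v : E, v ≠ 0 → (D ∩ {w | ∃ c : ℂ, w = z + c • v}).Nonempty →
    IsConnected (D ∩ {w | ∃ c : ℂ, w = z + c • v}) ∧
    SimplyConnectedSpace ↥(D ∩ {w | ∃ c : ℂ, w = z + c • v})

/-- Log-type `ℂ`-convex domain. -/
def LogTypeCConvex (D : Set E) : Prop :=
  IsOpen D ∧ D.Nonempty ∧ Bornology.IsBounded D ∧ CConvex D ∧
  ∃ C ν : ℝ, 0 < C ∧ 0 < ν ∧
    ∀ z ∈ D, ∀ v : E, v ≠ 0 →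
      bdistDir D z v ≤ C / |Real.log (bdist D z)| ^ (1 + ν)

/-- `σ : [a,b] → D` (with a.e. derivative `g`) is a `(λ,κ)`-almost geodesic for the
Kobayashi distance of `D`. -/
def AlmostGeodesicOn (D : Set E) (lam kap : ℝ) (σ g : ℝ → E) (a b : ℝ) : Prop :=
  MapsTo σ (Icc a b) D ∧ IsACWithDeriv σ g a b ∧
  (∀ s ∈ Icc a b, ∀ t ∈ Icc a b,
    (1 / lam) * |t - s| - kap ≤ kobDist D (σ s) (σ t) ∧
    kobDist D (σ s) (σ t) ≤ lam * |t - s| + kap) ∧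
  (∀ᵐ t ∂volume, t ∈ Icc a b → kobMetric D (σ t) (g t) ≤ lam)

/-- `σ : [a,b] → D` is a `C`-rough geodesic for the Kobayashi distance of `D`. -/
def RoughGeodesicOn (D : Set E) (C : ℝ) (σ : ℝ → E) (a b : ℝ) : Prop :=
  MapsTo σ (Icc a b) D ∧
  ∀ s ∈ Icc a b, ∀ t ∈ Icc a b,
    |t - s| - C ≤ kobDist D (σ s) (σ t) ∧ kobDist D (σ s) (σ t) ≤ |t - s| + C

/-- `ρ` is a `C¹` local defining function for `D` near `ξ` on the open set `W`. -/
def IsLocalDefiningFn (D : Set E) (ξ : E) (W : Set E) (ρ : E → ℝ) : Prop :=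
  IsOpen W ∧ ξ ∈ W ∧ ContDiffOn ℝ 1 ρ W ∧ (∀ x ∈ W, fderiv ℝ ρ x ≠ 0) ∧
  D ∩ W = {x ∈ W | ρ x < 0} ∧ frontier D ∩ W = {x ∈ W | ρ x = 0}

/-- `ξ` is a Dini-smooth boundary point of `D`: the boundary is `C¹` near `ξ` and the
unit normal admits a modulus of continuity `ω` satisfying the Dini condition. -/
def DiniSmoothBoundaryPoint (D : Set E) (ξ : E) : Prop :=
  ∃ (W : Set E) (ρ : E → ℝ) (ω : ℝ → ℝ),
    IsLocalDefiningFn D ξ W ρ ∧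
    (∀ t ∈ Icc (0:ℝ) 1, 0 ≤ ω t) ∧ MonotoneOn ω (Icc (0:ℝ) 1) ∧
    IntegrableOn (fun t => ω t / t) (Ioc (0:ℝ) 1) ∧
    ∀ x ∈ frontier D ∩ W, ∀ y ∈ frontier D ∩ W, ‖x - y‖ ≤ 1 →
      ‖(‖fderiv ℝ ρ x‖)⁻¹ • fderiv ℝ ρ x - (‖fderiv ℝ ρ y‖)⁻¹ • fderiv ℝ ρ y‖ ≤ ω ‖x - y‖

/-- `D` has `C^{1,ε}` boundary: near every boundary point there is a `C¹` defining
function whose differential is `ε`-Hölder. -/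
def HolderC1Boundary (D : Set E) (ε : ℝ) : Prop :=
  ∀ ξ ∈ frontier D, ∃ (W : Set E) (ρ : E → ℝ) (M : ℝ), 0 < M ∧
    IsLocalDefiningFn D ξ W ρ ∧
    ∀ x ∈ W, ∀ y ∈ W, ‖fderiv ℝ ρ x - fderiv ℝ ρ y‖ ≤ M * ‖x - y‖ ^ ε

/-- The complex affine tangent hyperplane of `∂D` at `x`, computed from a local
defining function `ρ`. -/
def complexTangentHyperplane (ρ : E → ℝ) (x : E) : Set E :=
  {w : E | fderiv ℝ ρ x (w - x) = 0 ∧ fderiv ℝ ρ x ((Complex.I : ℂ) • (w - x)) = 0}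

/-- The Gromov product of `x` and `y` with respect to the base point `o`, for the
Kobayashi distance of `D`. -/
def gromovProd (D : Set E) (o x y : E) : ℝ :=
  (kobDist D x o + kobDist D o y - kobDist D x y) / 2

end



section Kob

variable {E : Type*} [NormedAddCommGroup E] [NormedSpace ℂ E]

lemma kobMetric_bddBelow (D : Set E) (x v : E) : BddBelow { r : ℝ | ∃ (f : ℂ → E) (ξ : ℂ),
    DifferentiableOn ℂ f (ball (0:ℂ) 1) ∧ MapsTo f (ball (0:ℂ) 1) D ∧
    f 0 = x ∧ ξ • derivWithin f (ball (0:ℂ) 1) 0 = v ∧ r = ‖ξ‖ } := by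
  refine ⟨0, ?_⟩
  rintro r ⟨f, ξ, -, -, -, -, rfl⟩
  exact norm_nonneg _

lemma kobMetric_nonneg (D : Set E) (x v : E) : 0 ≤ kobMetric D x v := by
  apply Real.sInf_nonneg
  rintro r ⟨f, ξ, -, -, -, -, rfl⟩
  exact norm_nonneg _

lemma derivWithin_ball_zero (f : ℂ → E) : derivWithin f (ball (0:ℂ) 1) 0 = deriv f 0 :=
  derivWithin_of_isOpen isOpen_ball (mem_ball_self one_pos)

lemma kobMetric_le (D : Set E) (x v : E) (f : ℂ → E) (ξ : ℂ)
    (hf : DifferentiableOn ℂ f (ball (0:ℂ) 1)) (hm : MapsTo f (ball (0:ℂ) 1) D)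
    (h0 : f 0 = x) (h1 : ξ • deriv f 0 = v) : kobMetric D x v ≤ ‖ξ‖ := by
  apply csInf_le (kobMetric_bddBelow D x v)
  exact ⟨f, ξ, hf, hm, h0, by rw [derivWithin_ball_zero, h1], rfl⟩

/-- the Moebius disc competitor -/
lemma kobMetric_disc_aux (D : Set E) (q v : E) (c u R : ℝ) (hu : |u - c| < R)
    (hD : ∀ ζ : ℂ, ‖ζ - c‖ < R → q + ζ • v ∈ D) :
    ∃ f : ℂ → E, DifferentiableOn ℂ f (ball (0:ℂ) 1) ∧ MapsTo f (ball (0:ℂ) 1) D ∧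
      f 0 = q + (u:ℂ) • v ∧
      ((R / (R^2 - (u-c)^2) : ℝ) : ℂ) • deriv f 0 = v := by
  have hR : 0 < R := lt_of_le_of_lt (abs_nonneg _) hu
  set b : ℝ := (u - c) / R with hb
  have hb1 : |b| < 1 := by rw [hb, abs_div, abs_of_pos hR, div_lt_one hR]; exact hu
  have hb2 : 0 < 1 - b^2 := by
    have := (sq_lt_one_iff_abs_lt_one b).2 hb1
    linarith
  have hden : ∀ ζ ∈ ball (0:ℂ) 1, (1 + b * ζ : ℂ) ≠ 0 := by
    intro ζ hζ h
    have h1 : (b * ζ : ℂ) = -1 := by linear_combination h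
    have h2 : ‖(b * ζ : ℂ)‖ = 1 := by rw [h1]; simp
    rw [norm_mul, Complex.norm_real, Real.norm_eq_abs] at h2
    have h3 : ‖ζ‖ < 1 := by simpa using hζ
    nlinarith [abs_nonneg b, norm_nonneg ζ]
  have hφ : ∀ ζ ∈ ball (0:ℂ) 1, ‖(ζ + b) / (1 + b * ζ)‖ < 1 := by
    intro ζ hζ
    have h3 : ‖ζ‖ < 1 := by simpa using hζ
    rw [norm_div, div_lt_one (norm_pos_iff.2 (hden ζ hζ))]
    apply lt_of_pow_lt_pow_left₀ 2 (norm_nonneg _)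
    rw [← Complex.normSq_eq_norm_sq, ← Complex.normSq_eq_norm_sq]
    have h4 : Complex.normSq ζ < 1 := by
      rw [Complex.normSq_eq_norm_sq]; nlinarith [norm_nonneg ζ]
    simp only [Complex.normSq_apply, Complex.add_re, Complex.add_im, Complex.mul_re,
      Complex.mul_im, Complex.ofReal_re, Complex.ofReal_im, Complex.one_re, Complex.one_im] at h4 ⊢
    nlinarith
  have hder : ∀ ζ ∈ ball (0:ℂ) 1, HasDerivAt (fun ζ : ℂ => (ζ + b) / (1 + b * ζ))
      ((1 * (1 + b * ζ) - (ζ + b) * (b * 1)) / (1 + b * ζ)^2) ζ := by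
    intro ζ hζ
    exact HasDerivAt.div ((hasDerivAt_id ζ).add_const _)
      (((hasDerivAt_id ζ).const_mul (b:ℂ)).const_add 1) (hden ζ hζ)
  have hder2 : ∀ ζ ∈ ball (0:ℂ) 1, HasDerivAt
      (fun ζ : ℂ => q + ((c:ℂ) + R * ((ζ + b) / (1 + b * ζ))) • v)
      (((R:ℂ) * ((1 * (1 + b * ζ) - (ζ + b) * (b * 1)) / (1 + b * ζ)^2)) • v) ζ := by
    intro ζ hζ
    exact ((((hder ζ hζ).const_mul (R:ℂ)).const_add _).smul_const v).const_add q
  refine ⟨fun ζ => q + ((c:ℂ) + R * ((ζ + b) / (1 + b * ζ))) • v, ?_, ?_, ?_, ?_⟩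
  · intro ζ hζ
    exact (hder2 ζ hζ).differentiableAt.differentiableWithinAt
  · intro ζ hζ
    apply hD
    rw [add_sub_cancel_left, norm_mul, Complex.norm_real, Real.norm_eq_abs, abs_of_pos hR]
    have := hφ ζ hζ
    nlinarith
  · have : (c:ℂ) + R * b = u := by
      have h7 : c + R * b = u := by rw [hb]; field_simp; ring
      exact_mod_cast h7
    simp [this]
  · rw [(hder2 0 (mem_ball_self one_pos)).deriv, smul_smul]
    have : ((R / (R^2 - (u-c)^2) : ℝ) : ℂ) * ((R:ℂ) * ((1 * (1 + b * 0) - (0 + b) * (b * 1)) / (1 + b * 0)^2)) = 1 := by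
      have h5 : R / (R^2 - (u-c)^2) * (R * (1 - b^2)) = 1 := by
        have : R^2 - (u-c)^2 = R^2 * (1 - b^2) := by rw [hb]; field_simp
        rw [this]; field_simp
      have h6 := congrArg (fun t : ℝ => (t:ℂ)) h5
      push_cast at h6 ⊢
      refine Eq.trans ?_ h6
      ring
    rw [this, one_smul]

lemma kobMetric_le_disc (D : Set E) (q v : E) (c u R : ℝ) (hu : |u - c| < R)
    (hD : ∀ ζ : ℂ, ‖ζ - c‖ < R → q + ζ • v ∈ D) :
    kobMetric D (q + (u:ℂ) • v) v ≤ R / (R^2 - (u-c)^2) := by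
  obtain ⟨f, hf, hm, h0, h1⟩ := kobMetric_disc_aux D q v c u R hu hD
  refine (kobMetric_le D _ v f _ hf hm h0 h1).trans ?_
  rw [Complex.norm_real, Real.norm_eq_abs, abs_of_nonneg]
  have := sq_lt_sq' (neg_lt_of_abs_lt hu) (lt_of_abs_lt hu)
  exact div_nonneg ((abs_nonneg _).trans hu.le) (by linarith)

lemma kobSet_nonempty (D : Set E) (hD : IsOpen D) (x v : E) (hx : x ∈ D) :
    { r : ℝ | ∃ (f : ℂ → E) (ξ : ℂ),
    DifferentiableOn ℂ f (ball (0:ℂ) 1) ∧ MapsTo f (ball (0:ℂ) 1) D ∧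
    f 0 = x ∧ ξ • derivWithin f (ball (0:ℂ) 1) 0 = v ∧ r = ‖ξ‖ }.Nonempty := by
  obtain ⟨r, hr, hb⟩ := Metric.isOpen_iff.1 hD x hx
  obtain ⟨f, hf, hm, h0, h1⟩ := kobMetric_disc_aux D x v 0 0 (r / (‖v‖ + 1))
    (by rw [sub_zero, abs_zero]; positivity) (by
      intro ζ hζ
      apply hb
      rw [mem_ball, dist_eq_norm, add_sub_cancel_left, norm_smul]
      simp only [Complex.ofReal_zero, sub_zero] at hζ
      rw [lt_div_iff₀ (by positivity)] at hζ
      nlinarith [norm_nonneg ζ])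
  exact ⟨_, f, _, hf, hm, by simpa using h0, by rw [derivWithin_ball_zero]; exact h1, rfl⟩

lemma kobMetric_le_ball (D : Set E) (x v : E) (r : ℝ) (hr : 0 < r) (hb : ball x r ⊆ D) :
    kobMetric D x v ≤ ‖v‖ / r := by
  rcases eq_or_ne v 0 with rfl | hv
  · have := kobMetric_le D x 0 (fun _ => x) 0 (differentiableOn_const _)
      (fun _ _ => hb (mem_ball_self hr)) rfl (by simp)
    simpa using this
  have hv' : 0 < ‖v‖ := norm_pos_iff.2 hv
  have := kobMetric_le_disc D x v 0 0 (r / ‖v‖)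
    (by rw [sub_zero, abs_zero]; positivity) (by
      intro ζ hζ
      apply hb
      rw [mem_ball, dist_eq_norm, add_sub_cancel_left, norm_smul]
      simp only [Complex.ofReal_zero, sub_zero] at hζ
      rwa [lt_div_iff₀ (by positivity)] at hζ)
  simp only [Complex.ofReal_zero, zero_smul, add_zero] at this
  refine this.trans (le_of_eq ?_)
  field_simp
  ring

lemma kobMetric_neg (D : Set E) (x v : E) : kobMetric D x (-v) = kobMetric D x v := by
  unfold kobMetric
  congr 1
  ext r
  constructor
  · rintro ⟨f, ξ, h1, h2, h3, h4, h5⟩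
    exact ⟨f, -ξ, h1, h2, h3, by rw [neg_smul, h4, neg_neg], by rw [norm_neg, h5]⟩
  · rintro ⟨f, ξ, h1, h2, h3, h4, h5⟩
    exact ⟨f, -ξ, h1, h2, h3, by rw [neg_smul, h4], by rw [norm_neg, h5]⟩

/-- Schwarz in a half-plane -/
lemma halfplane_schwarz (F : ℂ → ℂ) (hF : DifferentiableOn ℂ F (ball (0:ℂ) 1))
    (hm : ∀ ζ ∈ ball (0:ℂ) 1, 0 < (F ζ).re) : ‖deriv F 0‖ ≤ 2 * (F 0).re := by
  have h0 : (0:ℂ) ∈ ball (0:ℂ) 1 := mem_ball_self one_pos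
  have hden : ∀ ζ ∈ ball (0:ℂ) 1, F ζ + (starRingEnd ℂ) (F 0) ≠ 0 := by
    intro ζ hζ h
    have := congrArg Complex.re h
    simp at this
    linarith [hm ζ hζ, hm 0 h0]
  set G : ℂ → ℂ := fun ζ => (F ζ - F 0) / (F ζ + (starRingEnd ℂ) (F 0)) with hG
  have hG0 : G 0 = 0 := by simp [hG]
  have hGd : DifferentiableOn ℂ G (ball (0:ℂ) 1) :=
    (hF.sub_const _).div (hF.add_const _) hden
  have hGm : MapsTo G (ball (0:ℂ) 1) (closedBall (G 0) 1) := by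
    intro ζ hζ
    rw [hG0, mem_closedBall_zero_iff, hG]
    simp only
    rw [norm_div, div_le_one (norm_pos_iff.2 (hden ζ hζ))]
    apply le_of_sq_le_sq _ (norm_nonneg _)
    rw [← Complex.normSq_eq_norm_sq, ← Complex.normSq_eq_norm_sq]
    simp only [Complex.normSq_apply, Complex.add_re, Complex.add_im, Complex.sub_re,
      Complex.sub_im, Complex.conj_re, Complex.conj_im]
    nlinarith [mul_pos (hm ζ hζ) (hm 0 h0)]
  have h1 := Complex.norm_deriv_le_one_of_mapsTo_ball hGd hGm one_pos
  have hFd : HasDerivAt F (deriv F 0) 0 :=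
    ((hF 0 h0).differentiableAt (isOpen_ball.mem_nhds h0)).hasDerivAt
  have h2 : HasDerivAt G _ 0 := (hFd.sub_const (F 0)).div (hFd.add_const ((starRingEnd ℂ) (F 0))) (hden 0 h0)
  have h3 : deriv G 0 = deriv F 0 / (2 * (F 0).re : ℝ) := by
    rw [h2.deriv]
    have h4 : F 0 + (starRingEnd ℂ) (F 0) = (2 * (F 0).re : ℝ) := by
      rw [Complex.add_conj]
    have h5 := hden 0 h0
    rw [h4] at h5 ⊢
    field_simp
    ring
  rw [h3, norm_div, Complex.norm_real, Real.norm_eq_abs,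
    abs_of_pos (by linarith [hm 0 h0]), div_le_one (by linarith [hm 0 h0])] at h1
  exact h1

lemma kobMetric_lower (D : Set E) (hD : IsOpen D) (ℓ : E →L[ℂ] ℂ) (κ : ℝ)
    (hℓ : ∀ y ∈ D, (ℓ y).re < κ) (x v : E) (hx : x ∈ D) :
    ‖ℓ v‖ / (2 * (κ - (ℓ x).re)) ≤ kobMetric D x v := by
  apply le_csInf (kobSet_nonempty D hD x v hx)
  rintro r ⟨f, ξ, hf, hm, h0, h1, rfl⟩
  rw [derivWithin_ball_zero] at h1
  have hpos : 0 < κ - (ℓ x).re := by linarith [hℓ x hx]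
  rw [div_le_iff₀ (by linarith)]
  have hz : (0:ℂ) ∈ ball (0:ℂ) 1 := mem_ball_self one_pos
  have hfd : HasDerivAt f (deriv f 0) 0 :=
    ((hf 0 hz).differentiableAt (isOpen_ball.mem_nhds hz)).hasDerivAt
  have hd : HasDerivAt (fun ζ => (κ:ℂ) - ℓ (f ζ)) (-(ℓ (deriv f 0))) 0 :=
    (ℓ.hasFDerivAt.comp_hasDerivAt (0:ℂ) hfd).const_sub _
  have := halfplane_schwarz (fun ζ => (κ:ℂ) - ℓ (f ζ))
    ((ℓ.differentiable.comp_differentiableOn hf).const_sub _) (by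
      intro ζ hζ
      have := hℓ _ (hm hζ)
      simp only [Complex.sub_re, Complex.ofReal_re]
      linarith)
  rw [hd.deriv, norm_neg] at this
  simp only [Complex.sub_re, Complex.ofReal_re, h0] at this
  rw [← h1, map_smul, smul_eq_mul, norm_mul]
  exact mul_le_mul_of_nonneg_left this (norm_nonneg _)

end Kob

section KobPath

variable {E : Type*} [NormedAddCommGroup E] [NormedSpace ℂ E]

lemma integral_congr_on_uIoc {f g : ℝ → E} {a b : ℝ} (h : ∀ s ∈ uIoc a b, f s = g s) :
    (∫ s in a..b, f s) = ∫ s in a..b, g s :=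
  intervalIntegral.integral_congr_ae (Eventually.of_forall h)

lemma integral_congr_on_uIoc' {f g : ℝ → ℝ} {a b : ℝ} (h : ∀ s ∈ uIoc a b, f s = g s) :
    (∫ s in a..b, f s) = ∫ s in a..b, g s :=
  intervalIntegral.integral_congr_ae (Eventually.of_forall h)

lemma kobMetric_usc (D : Set E) (hD : IsOpen D) (r : ℝ) :
    IsOpen {p : E × E | p.1 ∈ D ∧ kobMetric D p.1 p.2 < r} := by
  rw [isOpen_iff_mem_nhds]
  rintro ⟨x, v⟩ ⟨hx, hk⟩
  simp only at hx hk
  rcases eq_or_ne v 0 with rfl | hv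
  · have hr : 0 < r := (kobMetric_nonneg D x 0).trans_lt hk
    obtain ⟨η, hη, hb⟩ := Metric.isOpen_iff.1 hD x hx
    have hη2 : 0 < η / 2 := by linarith
    filter_upwards [prod_mem_nhds (ball_mem_nhds x hη2)
      (ball_mem_nhds (0:E) (mul_pos hr hη2))] with p hp
    obtain ⟨h1, h2⟩ := hp
    refine ⟨hb (ball_subset_ball (by linarith) h1), ?_⟩
    refine (kobMetric_le_ball D p.1 p.2 (η/2) hη2 ?_).trans_lt ?_
    · refine (ball_subset_ball' ?_).trans hb
      have := mem_ball.1 h1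
      linarith
    · rw [div_lt_iff₀ hη2]
      simpa using h2
  obtain ⟨r', ⟨f, ξ, hf, hm, h0, h1, rfl⟩, hr'⟩ := exists_lt_of_csInf_lt
    (kobSet_nonempty D hD x v hx) hk
  rw [derivWithin_ball_zero] at h1
  have hξ : ξ ≠ 0 := by
    rintro rfl
    rw [zero_smul] at h1
    exact hv h1.symm
  have hξ' : 0 < ‖ξ‖ := norm_pos_iff.2 hξ
  have hr : 0 < r := hξ'.trans hr'
  obtain ⟨s, hs1, hs2⟩ := exists_between ((div_lt_one hr).2 hr')
  have hs0 : 0 < s := (div_pos hξ' hr).trans hs1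
  have hsC : (s:ℂ) ≠ 0 := by exact_mod_cast hs0.ne'
  have hsub : closedBall (0:ℂ) s ⊆ ball (0:ℂ) 1 := closedBall_subset_ball hs2
  have hcomp : IsCompact (f '' closedBall (0:ℂ) s) :=
    (isCompact_closedBall _ _).image_of_continuousOn (hf.continuousOn.mono hsub)
  obtain ⟨η, hη, hth⟩ := hcomp.exists_thickening_subset_open hD
    (by rintro _ ⟨ζ, hζ, rfl⟩; exact hm (hsub hζ))
  have hη2 : 0 < η / 2 := by linarith
  have hη3 : 0 < η / 2 * (‖ξ‖ / s) := by positivity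
  filter_upwards [prod_mem_nhds (ball_mem_nhds x hη2) (ball_mem_nhds v hη3)] with p hp
  obtain ⟨hp1, hp2⟩ := hp
  rw [mem_ball, dist_eq_norm] at hp1 hp2
  have hz : (0:ℂ) ∈ ball (0:ℂ) 1 := mem_ball_self one_pos
  set G : ℂ → E := fun ζ => f (s * ζ) + ((p.1 - x) + ζ • ((s / ξ : ℂ) • (p.2 - v))) with hG
  have hmulmem : ∀ ζ ∈ ball (0:ℂ) 1, (s * ζ : ℂ) ∈ closedBall (0:ℂ) s := by
    intro ζ hζ
    have : ‖ζ‖ < 1 := by simpa using hζ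
    rw [mem_closedBall_zero_iff, norm_mul, Complex.norm_real, Real.norm_eq_abs, abs_of_pos hs0]
    nlinarith
  have hGm : MapsTo G (ball (0:ℂ) 1) D := by
    intro ζ hζ
    apply hth
    rw [Metric.mem_thickening_iff]
    refine ⟨f (s * ζ), ⟨_, hmulmem ζ hζ, rfl⟩, ?_⟩
    rw [dist_eq_norm, hG]
    simp only [add_sub_cancel_left]
    refine (norm_add_le _ _).trans_lt ?_
    rw [norm_smul, norm_smul, norm_div, Complex.norm_real, Real.norm_eq_abs, abs_of_pos hs0]
    have h3 : s / ‖ξ‖ * ‖p.2 - v‖ < η / 2 := by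
      calc s / ‖ξ‖ * ‖p.2 - v‖ < s / ‖ξ‖ * (η / 2 * (‖ξ‖ / s)) := by gcongr
        _ = η / 2 := by field_simp
    have h4 : ‖ζ‖ < 1 := by simpa using hζ
    have h5 : 0 ≤ s / ‖ξ‖ * ‖p.2 - v‖ := by positivity
    nlinarith [norm_nonneg ζ]
  have hGd : DifferentiableOn ℂ G (ball (0:ℂ) 1) := by
    apply DifferentiableOn.add
    · refine hf.comp (f := fun ζ : ℂ => (s * ζ : ℂ)) ?_ (fun ζ hζ => hsub (hmulmem ζ hζ))
      fun_prop
    · fun_prop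
  have hfd : HasDerivAt f (deriv f 0) ((s:ℂ) * 0) := by
    rw [mul_zero]
    exact ((hf 0 hz).differentiableAt (isOpen_ball.mem_nhds hz)).hasDerivAt
  have hGder : HasDerivAt G (((s:ℂ) * 1) • deriv f 0 + (1:ℂ) • ((s / ξ : ℂ) • (p.2 - v))) 0 := by
    apply HasDerivAt.add
    · exact HasDerivAt.scomp (0:ℂ) hfd ((hasDerivAt_id (0:ℂ)).const_mul (s:ℂ))
    · exact ((hasDerivAt_id (0:ℂ)).smul_const _).const_add _
  have hle : kobMetric D p.1 p.2 ≤ ‖ξ / s‖ := by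
    apply kobMetric_le D p.1 p.2 G (ξ / s) hGd hGm
    · simp [hG, h0]
    · rw [hGder.deriv, smul_add, one_smul, smul_smul, smul_smul, mul_one,
        div_mul_cancel₀ _ hsC, h1]
      have : ξ / s * (s / ξ) = 1 := by field_simp
      rw [this, one_smul]
      abel
  refine ⟨?_, hle.trans_lt ?_⟩
  · have := hGm hz
    simpa [hG, h0] using this
  · rw [norm_div, Complex.norm_real, Real.norm_eq_abs, abs_of_pos hs0, div_lt_iff₀ hs0]
    rw [div_lt_iff₀ hr] at hs1
    linarith

lemma kobMetric_measurable [MeasurableSpace E] [BorelSpace E] [SecondCountableTopology E]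
    (D : Set E) (hD : IsOpen D) :
    Measurable (indicator {p : E × E | p.1 ∈ D} (fun p => kobMetric D p.1 p.2)) := by
  apply measurable_of_Iio
  intro r
  have hDm : MeasurableSet {p : E × E | p.1 ∈ D} := (hD.preimage continuous_fst).measurableSet
  have : (indicator {p : E × E | p.1 ∈ D} (fun p => kobMetric D p.1 p.2)) ⁻¹' Iio r
      = {p : E × E | p.1 ∈ D ∧ kobMetric D p.1 p.2 < r} ∪
        ({p : E × E | p.1 ∈ D}ᶜ ∩ {_p | 0 < r}) := by
    ext p
    by_cases hp : p.1 ∈ D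
    · simp [hp, indicator]
    · simp [hp, indicator]
  rw [this]
  exact (kobMetric_usc D hD r).measurableSet.union (hDm.compl.inter (MeasurableSet.const _))

lemma IsACWithDeriv.continuousOn {σ g : ℝ → E} {a b : ℝ} (h : IsACWithDeriv σ g a b)
    (hab : a ≤ b) : ContinuousOn σ (Icc a b) := by
  have h1 := intervalIntegral.continuousOn_primitive_interval' h.1 (left_mem_uIcc)
  rw [uIcc_of_le hab] at h1
  exact (continuousOn_const.add h1).congr h.2

lemma kob_intervalIntegrable [MeasurableSpace E] [BorelSpace E] [SecondCountableTopology E]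
    (D : Set E) (hD : IsOpen D) {σ g : ℝ → E} {a b : ℝ} (h : IsACWithDeriv σ g a b)
    (hab : a ≤ b) (hm : MapsTo σ (Icc a b) D) :
    IntervalIntegrable (fun t => kobMetric D (σ t) (g t)) volume a b := by
  have hc := h.continuousOn hab
  have hcomp : IsCompact (σ '' Icc a b) := isCompact_Icc.image_of_continuousOn hc
  obtain ⟨η, hη, hth⟩ := hcomp.exists_thickening_subset_open hD
    (by rintro _ ⟨ζ, hζ, rfl⟩; exact hm hζ)
  rw [intervalIntegrable_iff_integrableOn_Ioc_of_le hab]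
  have hg := (intervalIntegrable_iff_integrableOn_Ioc_of_le hab).1 h.1
  have hσm : AEMeasurable σ (volume.restrict (Ioc a b)) :=
    (hc.mono Ioc_subset_Icc_self).aemeasurable measurableSet_Ioc
  have hgm : AEMeasurable g (volume.restrict (Ioc a b)) := hg.aestronglyMeasurable.aemeasurable
  have hmeas : AEMeasurable (fun t => kobMetric D (σ t) (g t)) (volume.restrict (Ioc a b)) := by
    refine ((kobMetric_measurable D hD).comp_aemeasurable (hσm.prodMk hgm)).congr ?_
    filter_upwards [ae_restrict_mem measurableSet_Ioc] with t ht
    have : σ t ∈ D := hm (Ioc_subset_Icc_self ht)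
    simp [indicator, this]
  refine Integrable.mono' (hg.norm.div_const η) hmeas.aestronglyMeasurable ?_
  filter_upwards [ae_restrict_mem measurableSet_Ioc] with t ht
  rw [Real.norm_eq_abs, abs_of_nonneg (kobMetric_nonneg _ _ _)]
  apply kobMetric_le_ball D _ _ _ hη
  exact (Metric.ball_subset_thickening (mem_image_of_mem σ (Ioc_subset_Icc_self ht)) η).trans hth

lemma IsACWithDeriv.shift {σ g : ℝ → E} {a b : ℝ} (h : IsACWithDeriv σ g a b) (s : ℝ) :
    IsACWithDeriv (fun t => σ (t + s)) (fun t => g (t + s)) (a - s) (b - s) := by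
  refine ⟨h.1.comp_add_right s, ?_⟩
  intro t ht
  simp only [intervalIntegral.integral_comp_add_right, sub_add_cancel]
  have h1 : t + s ∈ Icc a b := ⟨by linarith [ht.1], by linarith [ht.2]⟩
  exact h.2 _ h1

lemma IsACWithDeriv.reverse {σ g : ℝ → E} {a b : ℝ} (h : IsACWithDeriv σ g a b) (hab : a ≤ b) :
    IsACWithDeriv (fun t => σ (-t)) (fun t => - g (-t)) (-b) (-a) := by
  refine ⟨?_, ?_⟩
  · have h1 := (h.1.comp_mul_left (c := -1)).symm.neg
    have h2 : (fun t => - g (-t)) = -fun x => g (-x) := rfl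
    rw [h2]
    simpa [Function.comp_def, neg_one_mul, div_neg, div_one] using h1
  · intro t ht
    have ht' : -t ∈ Icc a b := ⟨by linarith [ht.2], by linarith [ht.1]⟩
    have hsub : IntervalIntegrable g volume a (-t) :=
      h.1.mono_set (by rw [uIcc_of_le hab, uIcc_of_le ht'.1]; exact Icc_subset_Icc_right ht'.2)
    have e1 : (∫ s in (-b)..t, - g (-s)) = - ∫ s in (-t)..b, g s := by
      rw [intervalIntegral.integral_neg, intervalIntegral.integral_comp_neg, neg_neg]
    rw [e1]
    simp only [neg_neg]
    rw [h.2 _ ht', h.2 b ⟨hab, le_rfl⟩, ← intervalIntegral.integral_interval_sub_left h.1 hsub]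
    abel

lemma IsACWithDeriv.concat {σ g τ k : ℝ → E} {a b c : ℝ} (hab : a ≤ b) (hbc : b ≤ c)
    (h : IsACWithDeriv σ g a b) (h' : IsACWithDeriv τ k b c) (hb : σ b = τ b) :
    IsACWithDeriv (fun t => if t ≤ b then σ t else τ t) (fun t => if t ≤ b then g t else k t)
      a c := by
  have i1 : ∀ t ≤ b, a ≤ t → ∀ s ∈ uIoc a t, g s = (if s ≤ b then g s else k s) := by
    intro t ht hat s hs
    rw [uIoc_of_le hat] at hs
    rw [if_pos (hs.2.trans ht)]
  have i2 : ∀ t, b ≤ t → ∀ s ∈ uIoc b t, k s = (if s ≤ b then g s else k s) := by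
    intro t ht s hs
    rw [uIoc_of_le ht] at hs
    rw [if_neg (not_le.2 hs.1)]
  have I1 : IntervalIntegrable (fun t => if t ≤ b then g t else k t) volume a b :=
    h.1.congr (fun s hs => i1 b le_rfl hab s hs)
  have I2 : IntervalIntegrable (fun t => if t ≤ b then g t else k t) volume b c :=
    h'.1.congr (fun s hs => i2 c hbc s hs)
  refine ⟨I1.trans I2, ?_⟩
  intro t ht
  simp only [if_pos hab]
  by_cases htb : t ≤ b
  · rw [if_pos htb, h.2 t ⟨ht.1, htb⟩]
    congr 1
    exact integral_congr_on_uIoc (i1 t htb ht.1)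
  · have htb' : b ≤ t := (not_le.1 htb).le
    rw [if_neg htb, h'.2 t ⟨htb', ht.2⟩, ← hb, h.2 b ⟨hab, le_rfl⟩,
      ← intervalIntegral.integral_add_adjacent_intervals I1 (I2.mono_set (by
        rw [uIcc_of_le hbc, uIcc_of_le htb']; exact Icc_subset_Icc_right ht.2)),
      integral_congr_on_uIoc (i1 b le_rfl hab),
      integral_congr_on_uIoc (i2 t htb'), add_assoc]

lemma kobDist_bddBelow (D : Set E) (x y : E) :
    BddBelow { r : ℝ | ∃ (a b : ℝ) (σ g : ℝ → E), a ≤ b ∧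
    IsACWithDeriv σ g a b ∧ MapsTo σ (Icc a b) D ∧ σ a = x ∧ σ b = y ∧
    r = ∫ t in a..b, kobMetric D (σ t) (g t) } := by
  refine ⟨0, ?_⟩
  rintro r ⟨a, b, σ, g, hab, -, -, -, -, rfl⟩
  exact intervalIntegral.integral_nonneg hab (fun t _ => kobMetric_nonneg _ _ _)

lemma kobDist_set_symm (D : Set E) (x y : E) (r : ℝ) (h : ∃ (a b : ℝ) (σ g : ℝ → E), a ≤ b ∧
    IsACWithDeriv σ g a b ∧ MapsTo σ (Icc a b) D ∧ σ a = x ∧ σ b = y ∧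
    r = ∫ t in a..b, kobMetric D (σ t) (g t)) : ∃ (a b : ℝ) (σ g : ℝ → E), a ≤ b ∧
    IsACWithDeriv σ g a b ∧ MapsTo σ (Icc a b) D ∧ σ a = y ∧ σ b = x ∧
    r = ∫ t in a..b, kobMetric D (σ t) (g t) := by
  obtain ⟨a, b, σ, g, hab, hac, hm, hx, hy, hr⟩ := h
  refine ⟨-b, -a, _, _, by linarith, hac.reverse hab, ?_, by simpa using hy, by simpa using hx, ?_⟩
  · intro t ht
    exact hm ⟨by linarith [ht.2], by linarith [ht.1]⟩
  · simp only [kobMetric_neg]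
    rw [intervalIntegral.integral_comp_neg (fun t => kobMetric D (σ t) (g t)), neg_neg, neg_neg, hr]

lemma kobDist_symm (D : Set E) (x y : E) : kobDist D x y = kobDist D y x := by
  unfold kobDist
  congr 1
  ext r
  exact ⟨kobDist_set_symm D x y r, kobDist_set_symm D y x r⟩

lemma kobDist_le_of_line (D : Set E) (q v : E) (a b : ℝ) (hab : a ≤ b) (B : ℝ → ℝ)
    [CompleteSpace E]
    (hB : IntervalIntegrable B volume a b) (hD : ∀ t ∈ Icc a b, q + (t:ℂ) • v ∈ D)
    (hk : ∀ t ∈ Icc a b, kobMetric D (q + (t:ℂ) • v) v ≤ B t) :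
    kobDist D (q + (a:ℂ) • v) (q + (b:ℂ) • v) ≤ ∫ t in a..b, B t := by
  have h1 : kobDist D (q + (a:ℂ) • v) (q + (b:ℂ) • v) ≤
      ∫ t in a..b, kobMetric D (q + (t:ℂ) • v) v := by
    apply csInf_le (kobDist_bddBelow D _ _)
    refine ⟨a, b, fun t => q + (t:ℂ) • v, fun _ => v, hab, ⟨intervalIntegrable_const, ?_⟩,
      hD, rfl, rfl, rfl⟩
    intro t ht
    simp only [intervalIntegral.integral_const]
    rw [← Complex.coe_smul, Complex.ofReal_sub, sub_smul]
    abel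
  refine h1.trans ?_
  rw [intervalIntegral.integral_of_le hab, intervalIntegral.integral_of_le hab]
  apply integral_mono_of_nonneg
  · exact Eventually.of_forall fun t => kobMetric_nonneg _ _ _
  · exact (intervalIntegrable_iff_integrableOn_Ioc_of_le hab).1 hB
  · filter_upwards [ae_restrict_mem measurableSet_Ioc] with t ht
    exact hk t (Ioc_subset_Icc_self ht)

lemma kobDist_set_nonempty [CompleteSpace E] (D : Set E) (hD : Convex ℝ D) (x y : E) (hx : x ∈ D)
    (hy : y ∈ D) : { r : ℝ | ∃ (a b : ℝ) (σ g : ℝ → E), a ≤ b ∧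
    IsACWithDeriv σ g a b ∧ MapsTo σ (Icc a b) D ∧ σ a = x ∧ σ b = y ∧
    r = ∫ t in a..b, kobMetric D (σ t) (g t) }.Nonempty := by
  refine ⟨_, 0, 1, fun t => x + t • (y - x), fun _ => y - x, zero_le_one,
    ⟨intervalIntegrable_const, ?_⟩, ?_, by simp, by simp, rfl⟩
  · intro t ht
    simp only [intervalIntegral.integral_const]
    simp
  · intro t ht
    exact hD.add_smul_sub_mem hx hy ht

lemma kobDist_triangle [MeasurableSpace E] [BorelSpace E] [SecondCountableTopology E]
    [CompleteSpace E] (D : Set E) (hD : IsOpen D) (hc : Convex ℝ D) (x y z : E)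
    (hx : x ∈ D) (hy : y ∈ D) (hz : z ∈ D) :
    kobDist D x z ≤ kobDist D x y + kobDist D y z := by
  apply le_of_forall_pos_le_add
  intro e he
  obtain ⟨r1, ⟨a, b, σ, g, hab, hac, hm, h1, h2, hr1⟩, hlt1⟩ := Real.lt_sInf_add_pos
    (kobDist_set_nonempty D hc x y hx hy) (half_pos he)
  obtain ⟨r2, ⟨c, d, τ, k, hcd, hac', hm', h3, h4, hr2⟩, hlt2⟩ := Real.lt_sInf_add_pos
    (kobDist_set_nonempty D hc y z hy hz) (half_pos he)
  have hsh := hac'.shift (c - b)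
  rw [sub_sub_cancel] at hsh
  have hbd : b ≤ d - (c - b) := by linarith
  have hcon := hac.concat hab hbd hsh (by rw [h2]; simp [h3])
  have hmap : MapsTo (fun t => if t ≤ b then σ t else τ (t + (c - b))) (Icc a (d - (c - b))) D := by
    intro t ht
    by_cases htb : t ≤ b
    · simp only [if_pos htb]; exact hm ⟨ht.1, htb⟩
    · simp only [if_neg htb]; exact hm' ⟨by linarith, by linarith [ht.2]⟩
  have hint := kob_intervalIntegrable D hD hcon (hab.trans hbd) hmap
  have hle : kobDist D x z ≤ ∫ t in a..(d - (c - b)),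
      kobMetric D (if t ≤ b then σ t else τ (t + (c - b))) (if t ≤ b then g t else k (t + (c - b))) := by
    apply csInf_le (kobDist_bddBelow D _ _)
    refine ⟨a, d - (c - b), _, _, hab.trans hbd, hcon, hmap, by simp [hab, h1], ?_, rfl⟩
    by_cases hdb : d - (c - b) ≤ b
    · have hdc : d = c := by linarith
      have : z = y := by rw [← h3, ← h4, hdc]
      simp [hdc, h2, this]
    · simp only [if_neg hdb]; rw [sub_add_cancel, h4]
  rw [← intervalIntegral.integral_add_adjacent_intervals (b := b)
    (hint.mono_set (by rw [uIcc_of_le hab, uIcc_of_le (hab.trans hbd)]; exact Icc_subset_Icc_right hbd))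
    (hint.mono_set (by rw [uIcc_of_le hbd, uIcc_of_le (hab.trans hbd)]; exact Icc_subset_Icc_left hab))] at hle
  have e1 : (∫ t in a..b, kobMetric D (if t ≤ b then σ t else τ (t + (c - b)))
      (if t ≤ b then g t else k (t + (c - b)))) = r1 := by
    rw [hr1]
    apply integral_congr_on_uIoc'
    intro t ht
    rw [uIoc_of_le hab] at ht
    simp only [if_pos ht.2]
  have e2 : (∫ t in b..(d - (c - b)), kobMetric D (if t ≤ b then σ t else τ (t + (c - b)))
      (if t ≤ b then g t else k (t + (c - b)))) = r2 := by
    have : (∫ t in b..(d - (c - b)), kobMetric D (τ (t + (c - b))) (k (t + (c - b)))) = r2 := by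
      rw [intervalIntegral.integral_comp_add_right (fun t => kobMetric D (τ t) (k t)), hr2]
      congr 1 <;> ring
    rw [← this]
    apply integral_congr_on_uIoc'
    intro t ht
    rw [uIoc_of_le hbd] at ht
    simp only [if_neg (not_le.2 ht.1)]
  rw [e1, e2] at hle
  change r1 < kobDist D x y + e / 2 at hlt1
  change r2 < kobDist D y z + e / 2 at hlt2
  linarith

end KobPath

section KobLower

lemma ac_log {H : ℝ → ℝ} {a b m : ℝ} (hm : 0 < m) (hH : ∀ t ∈ uIcc a b, m ≤ H t)
    (h : AbsolutelyContinuousOnInterval H a b) :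
    AbsolutelyContinuousOnInterval (fun t => Real.log (H t)) a b := by
  have hlog : ∀ s ∈ uIcc a b, ∀ t ∈ uIcc a b,
      dist (Real.log (H s)) (Real.log (H t)) ≤ m⁻¹ * dist (H s) (H t) := by
    have key : ∀ s ∈ uIcc a b, ∀ t ∈ uIcc a b,
      Real.log (H s) - Real.log (H t) ≤ m⁻¹ * |H s - H t| := by
      intro s hs t ht
      have h1 := hH s hs
      have h2 := hH t ht
      have p1 : 0 < H s := by linarith
      have p2 : 0 < H t := by linarith
      rw [← Real.log_div p1.ne' p2.ne']
      refine (Real.log_le_sub_one_of_pos (div_pos p1 p2)).trans ?_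
      have : H s / H t - 1 = (H t)⁻¹ * (H s - H t) := by field_simp
      rw [this]
      calc (H t)⁻¹ * (H s - H t) ≤ (H t)⁻¹ * |H s - H t| := by
            gcongr; exact le_abs_self _
        _ ≤ m⁻¹ * |H s - H t| := by gcongr
    intro s hs t ht
    rw [Real.dist_eq, Real.dist_eq, abs_le]
    have k1 := key s hs t ht
    have k2 := key t ht s hs
    rw [abs_sub_comm] at k2
    constructor <;> linarith
  unfold AbsolutelyContinuousOnInterval at h ⊢
  have h2 := h.const_mul m⁻¹
  rw [mul_zero] at h2
  refine squeeze_zero' (Eventually.of_forall fun E => Finset.sum_nonneg fun i _ => dist_nonneg) ?_ h2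
  refine eventually_inf_principal.2 (Eventually.of_forall fun E hE => ?_)
  rw [Finset.mul_sum]
  apply Finset.sum_le_sum
  intro i hi
  have := hE.1 i hi
  exact hlog _ this.1 _ this.2

variable {E : Type*} [NormedAddCommGroup E] [NormedSpace ℂ E]
  [MeasurableSpace E] [BorelSpace E] [SecondCountableTopology E] [CompleteSpace E]

lemma kobDist_lower (D : Set E) (hD : IsOpen D) (hc : Convex ℝ D) (ℓ : E →L[ℂ] ℂ) (κ : ℝ)
    (hℓ : ∀ y ∈ D, (ℓ y).re < κ) (x y : E) (hx : x ∈ D) (hy : y ∈ D) :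
    (1/2) * (Real.log (κ - (ℓ y).re) - Real.log (κ - (ℓ x).re)) ≤ kobDist D x y := by
  apply le_csInf (kobDist_set_nonempty D hc x y hx hy)
  rintro r ⟨a, b, σ, g, hab, hac, hm, rfl, rfl, rfl⟩
  have hint := kob_intervalIntegrable D hD hac hab hm
  set Λ : E →L[ℝ] ℝ := Complex.reCLM.comp (ℓ.restrictScalars ℝ) with hΛ
  have hΛa : ∀ v, Λ v = (ℓ v).re := fun v => rfl
  set φ : ℝ → ℝ := fun t => - Λ (g t) with hφ
  have hφi : IntervalIntegrable φ volume a b := by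
    have : IntervalIntegrable (fun t => Λ (g t)) volume a b :=
      ⟨Λ.integrable_comp hac.1.1, Λ.integrable_comp hac.1.2⟩
    exact this.neg
  set H : ℝ → ℝ := fun t => (κ - Λ (σ a)) + ∫ s in a..t, φ s with hH
  have hHe : ∀ t ∈ Icc a b, H t = κ - Λ (σ t) := by
    intro t ht
    have hgi : IntervalIntegrable g volume a t :=
      hac.1.mono_set (by rw [uIcc_of_le hab, uIcc_of_le ht.1]; exact Icc_subset_Icc_right ht.2)
    rw [hac.2 t ht, map_add, ← Λ.intervalIntegral_comp_comm hgi]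
    simp only [hH, hφ, intervalIntegral.integral_neg]
    ring
  have hcσ := hac.continuousOn hab
  have hcΛ : ContinuousOn (fun t => κ - Λ (σ t)) (Icc a b) :=
    continuousOn_const.sub (Λ.continuous.comp_continuousOn hcσ)
  obtain ⟨t0, ht0, hmin⟩ := isCompact_Icc.exists_isMinOn (nonempty_Icc.2 hab) hcΛ
  have hmpos : 0 < κ - Λ (σ t0) := by
    have := hℓ _ (hm ht0)
    rw [hΛa]; linarith
  have hHac : AbsolutelyContinuousOnInterval H a b := by
    apply AbsolutelyContinuousOnInterval.add
    · exact (LipschitzWith.const (κ - Λ (σ a))).lipschitzOnWith.absolutelyContinuousOnInterval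
    · exact hφi.absolutelyContinuousOnInterval_intervalIntegral left_mem_uIcc
  have hLac : AbsolutelyContinuousOnInterval (fun t => Real.log (H t)) a b := by
    apply ac_log hmpos _ hHac
    intro t ht
    rw [uIcc_of_le hab] at ht
    rw [hHe t ht]
    exact hmin ht
  have hftc := hLac.integral_deriv_eq_sub
  rw [hHe a ⟨le_rfl, hab⟩, hHe b ⟨hab, le_rfl⟩, hΛa, hΛa] at hftc
  rw [← hftc]
  have hmono : ∫ t in a..b, deriv (fun t => Real.log (H t)) t ≤
      ∫ t in a..b, 2 * kobMetric D (σ t) (g t) := by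
    apply intervalIntegral.integral_mono_ae_restrict hab hLac.intervalIntegrable_deriv
      (hint.const_mul 2)
    filter_upwards [ae_restrict_mem measurableSet_Icc,
      ae_restrict_of_ae hφi.ae_hasDerivAt_integral] with t ht hd
    have hd1 := hd (by rwa [uIcc_of_le hab]) a left_mem_uIcc
    have hd2 : HasDerivAt H (φ t) t := hd1.const_add _
    have hpos : 0 < κ - (ℓ (σ t)).re := by linarith [hℓ _ (hm ht)]
    have hHt : H t = κ - (ℓ (σ t)).re := hHe t ht
    have hd3 := hd2.log (by rw [hHt]; exact hpos.ne')
    rw [hd3.deriv, hHt]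
    have hl := kobMetric_lower D hD ℓ κ hℓ (σ t) (g t) (hm ht)
    have : φ t ≤ ‖ℓ (g t)‖ := by
      have h1 := Complex.abs_re_le_norm (ℓ (g t))
      have h2 := neg_abs_le (ℓ (g t)).re
      simp only [hφ, hΛa]; linarith
    calc φ t / (κ - (ℓ (σ t)).re) ≤ ‖ℓ (g t)‖ / (κ - (ℓ (σ t)).re) := by gcongr
      _ = 2 * (‖ℓ (g t)‖ / (2 * (κ - (ℓ (σ t)).re))) := by field_simp
      _ ≤ _ := by linarith
  rw [intervalIntegral.integral_const_mul] at hmono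
  linarith

/-- lower bound by distances -/
lemma kobDist_lower_dist (D : Set E) (hD : IsOpen D) (hc : Convex ℝ D) (o z p : E) (r0 : ℝ)
    (hr0 : 0 < r0) (ho : ball o r0 ⊆ D) (hz : z ∈ D) (hp : p ∉ D) :
    (1/2) * (Real.log r0 - Real.log ‖z - p‖) ≤ kobDist D z o := by
  obtain ⟨ℓ, hℓ⟩ := RCLike.geometric_hahn_banach_open_point (𝕜 := ℂ) hc hD hp
  have hℓ' : ∀ y ∈ D, (ℓ y).re < (ℓ p).re := hℓ
  have hoD : o ∈ D := ho (mem_ball_self hr0)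
  have hpz : 0 < (ℓ p).re - (ℓ z).re := by linarith [hℓ' z hz]
  have hpo : 0 < (ℓ p).re - (ℓ o).re := by linarith [hℓ' o hoD]
  have hz1 : (ℓ p).re - (ℓ z).re ≤ ‖ℓ‖ * ‖z - p‖ := by
    rw [norm_sub_rev, ← Complex.sub_re, ← map_sub]
    exact (Complex.re_le_norm _).trans (ℓ.le_opNorm _)
  have hzp : 0 < ‖z - p‖ := norm_pos_iff.2 (sub_ne_zero.2 (by rintro rfl; exact hp hz))
  have hℓn : 0 < ‖ℓ‖ := by
    by_contra h
    have : ‖ℓ‖ = 0 := le_antisymm (not_lt.1 h) (norm_nonneg _)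
    rw [this, zero_mul] at hz1
    linarith
  have hop : ‖ℓ‖ ≤ ((ℓ p).re - (ℓ o).re) / r0 := by
    apply ContinuousLinearMap.opNorm_le_bound _ (by positivity)
    intro v
    by_contra hcon
    push Not at hcon
    set d : ℝ := (ℓ p).re - (ℓ o).re with hd
    have hlv : 0 < ‖ℓ v‖ := lt_of_le_of_lt (by positivity) hcon
    have hlv' : ℓ v ≠ 0 := norm_pos_iff.1 hlv
    have hmem : o + ((d:ℂ) / ℓ v) • v ∈ D := by
      apply ho
      rw [mem_ball, dist_eq_norm, add_sub_cancel_left, norm_smul, norm_div, Complex.norm_real,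
        Real.norm_eq_abs, abs_of_pos hpo, div_mul_eq_mul_div, div_lt_iff₀ hlv]
      rw [div_mul_eq_mul_div, div_lt_iff₀ hr0] at hcon
      linarith
    have h1 := hℓ' _ hmem
    rw [map_add, map_smul, smul_eq_mul, div_mul_cancel₀ _ hlv', Complex.add_re,
      Complex.ofReal_re] at h1
    linarith
  have := kobDist_lower D hD hc ℓ (ℓ p).re hℓ' z o hz hoD
  refine le_trans ?_ this
  have h1 : ‖ℓ‖ * r0 ≤ (ℓ p).re - (ℓ o).re := by rwa [le_div_iff₀ hr0] at hop
  have h2 := Real.log_le_log (by positivity) h1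
  have h3 := Real.log_le_log hpz hz1
  rw [Real.log_mul hℓn.ne' hr0.ne'] at h2
  rw [Real.log_mul hℓn.ne' hzp.ne'] at h3
  linarith

end KobLower

section Geometry

variable {E : Type*} [NormedAddCommGroup E] [InnerProductSpace ℂ E]

lemma exists_nearest [ProperSpace E] (D : Set E) (hD : IsOpen D) (z x : E) (hz : z ∈ D)
    (hx : x ∈ frontier D) : ∃ p ∈ frontier D, ‖z - p‖ ≤ ‖z - x‖ ∧ ball z ‖z - p‖ ⊆ D := by
  obtain ⟨p, hp, hd⟩ := isClosed_frontier.exists_infDist_eq_dist ⟨x, hx⟩ z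
  refine ⟨p, hp, ?_, ?_⟩
  · rw [← dist_eq_norm, ← dist_eq_norm, ← hd]
    exact infDist_le_dist_of_mem hx
  · have hpre : IsPreconnected (ball z ‖z - p‖) := by
      have : NormedSpace ℝ E := inferInstance
      exact (convex_ball z _).isPreconnected
    have hzp : 0 < ‖z - p‖ := by
      rw [norm_pos_iff, sub_ne_zero]
      rintro rfl
      rw [hD.frontier_eq] at hp
      exact hp.2 hz
    refine hpre.subset_left_of_subset_union hD isClosed_closure.isOpen_compl
      (disjoint_compl_right_iff_subset.2 subset_closure) ?_ ⟨z, mem_ball_self hzp, hz⟩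
    intro y hy
    by_contra hcon
    simp only [mem_union, mem_compl_iff, not_or, not_not] at hcon
    have hyf : y ∈ frontier D := by rw [hD.frontier_eq]; exact ⟨hcon.2, hcon.1⟩
    have h1 := infDist_le_dist_of_mem (x := z) hyf
    rw [hd, dist_eq_norm, dist_comm] at h1
    exact absurd (mem_ball.1 hy) (not_lt.2 h1)

lemma linfun_normal (L : E →L[ℝ] ℝ) (n : E) (hn : ‖n‖ = 1)
    (hL : ∀ h : E, 0 < (inner ℂ n h).re → L h ≤ 0) (h : E) :
    L h = - ‖L‖ * (inner ℂ n h).re := by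
  have hnn : (inner ℂ n n).re = 1 := by
    rw [inner_self_eq_norm_sq_to_K, hn]; simp
  have hreal : ∀ (s : ℝ) (k : E), (inner ℂ n (s • k)).re = s * (inner ℂ n k).re := by
    intro s k
    rw [← Complex.coe_smul, inner_smul_right, Complex.re_ofReal_mul]
  have hLn : L n ≤ 0 := hL n (by rw [hnn]; exact one_pos)
  have h0 : ∀ k : E, (inner ℂ n k).re = 0 → L k ≤ 0 := by
    intro k hk
    apply le_of_forall_pos_le_add
    intro e he
    have h1 := hL (k + (e / (1 + |L n|)) • n) (by
      rw [inner_add_right, Complex.add_re, hk, hreal, hnn]; positivity)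
    rw [map_add, map_smul, smul_eq_mul] at h1
    have h2 : -(e / (1 + |L n|) * L n) ≤ e := by
      rw [abs_of_nonpos hLn, div_mul_eq_mul_div, ← neg_div, div_le_iff₀ (by linarith)]
      nlinarith
    linarith
  have h1 : ∀ k : E, L k = L n * (inner ℂ n k).re := by
    intro k
    have e0 : (inner ℂ n (k - ((inner ℂ n k).re : ℝ) • n)).re = 0 := by
      rw [inner_sub_right, Complex.sub_re, hreal, hnn]; ring
    have e1 := h0 _ e0
    have e2 := h0 (-(k - ((inner ℂ n k).re : ℝ) • n)) (by
      rw [inner_neg_right, Complex.neg_re, e0, neg_zero])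
    rw [map_neg] at e2
    rw [map_sub, map_smul, smul_eq_mul] at e1 e2
    linarith
  have h2 : ‖L‖ = - L n := by
    apply le_antisymm
    · apply ContinuousLinearMap.opNorm_le_bound _ (by linarith)
      intro k
      rw [h1 k, Real.norm_eq_abs, abs_mul, abs_of_nonpos hLn]
      have : |(inner ℂ n k).re| ≤ ‖k‖ := by
        refine (Complex.abs_re_le_norm _).trans ((norm_inner_le_norm _ _).trans ?_)
        rw [hn, one_mul]
      exact mul_le_mul_of_nonneg_left this (by linarith)
    · have := L.le_opNorm n
      rw [hn, mul_one, Real.norm_eq_abs, abs_of_nonpos hLn] at this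
      exact this
  rw [h1 h, h2]; ring

lemma re_inner_unit (n : E) (hn : ‖n‖ = 1) (ζ : ℂ) : (inner ℂ n (ζ • n)).re = ζ.re := by
  rw [inner_smul_right, inner_self_eq_norm_sq_to_K, hn]; simp

/-- derivative of a defining function at the foot of a normal -/
lemma fderiv_nonpos (D W : Set E) (hW : IsOpen W) (ρ : E → ℝ) (p n : E) (δ : ℝ) (hδ : 0 < δ)
    (hpW : p ∈ W) (hball : ball (p + (δ:ℂ) • n) δ ⊆ D) (hn : ‖n‖ = 1)
    (hρ : ∀ y ∈ D ∩ W, ρ y < 0) (hp0 : ρ p = 0) (hd : DifferentiableAt ℝ ρ p) (h : E)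
    (hh : 0 < (inner ℂ n h).re) : fderiv ℝ ρ p h ≤ 0 := by
  have hder : HasDerivAt (fun s : ℝ => ρ (p + s • h)) (fderiv ℝ ρ p h) 0 := by
    have h1 : HasFDerivAt ρ (fderiv ℝ ρ p) (p + (0:ℝ) • h) := by
      rw [zero_smul, add_zero]; exact hd.hasFDerivAt
    have h2 : HasDerivAt (fun s : ℝ => p + s • h) ((1:ℝ) • h) 0 :=
      ((hasDerivAt_id (0:ℝ)).smul_const h).const_add p
    rw [one_smul] at h2
    exact h1.comp_hasDerivAt (0:ℝ) h2
  have ht := hder.tendsto_slope_zero_right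
  refine le_of_tendsto ht ?_
  have hcont : Tendsto (fun s : ℝ => p + s • h) (𝓝[>] 0) (𝓝 p) := by
    have : Continuous (fun s : ℝ => p + s • h) := by fun_prop
    have := this.tendsto 0
    simp only [zero_smul, add_zero] at this
    exact this.mono_left nhdsWithin_le_nhds
  have hsm : ∀ᶠ s : ℝ in 𝓝[>] 0, s * ‖h‖^2 < 2 * δ * (inner ℂ n h).re := by
    have : Continuous (fun s : ℝ => s * ‖h‖^2) := by fun_prop
    have := this.tendsto 0
    simp only [zero_mul] at this
    exact (this.mono_left nhdsWithin_le_nhds).eventually_lt_const (by positivity)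
  filter_upwards [hcont.eventually (hW.mem_nhds hpW), hsm, self_mem_nhdsWithin] with s hs1 hs2 hs3
  have hs3' : 0 < s := hs3
  have hmem : p + s • h ∈ ball (p + (δ:ℂ) • n) δ := by
    rw [mem_ball, dist_eq_norm, add_sub_add_left_eq_sub, norm_sub_rev]
    apply lt_of_pow_lt_pow_left₀ 2 hδ.le
    rw [@norm_sub_sq ℂ, ← Complex.coe_smul, inner_smul_left, inner_smul_right]
    simp only [Complex.conj_ofReal, RCLike.re_eq_complex_re, Complex.re_ofReal_mul, norm_smul, hn,
      Complex.norm_real, Real.norm_eq_abs, abs_of_pos hδ, abs_of_pos hs3', mul_one]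
    nlinarith
  have := hρ _ ⟨hball hmem, hs1⟩
  rw [zero_add, zero_smul, add_zero, hp0, sub_zero, smul_eq_mul]
  exact mul_nonpos_of_nonneg_of_nonpos (inv_nonneg.2 hs3'.le) this.le

/-- The cone-like property -/
def ConeProp (D : Set E) (p n : E) (C r0 ε : ℝ) : Prop :=
  ∀ y, ‖y - p‖ < r0 → C * ‖y - p‖ ^ (1 + ε) < (inner ℂ n (y - p)).re → y ∈ D

lemma exists_cone (D : Set E) (ε : ℝ) (hε : 0 < ε) (hbd : HolderC1Boundary D ε)
    (x : E) (hx : x ∈ frontier D) :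
    ∃ C r0 : ℝ, 0 < C ∧ 0 < r0 ∧ ∀ (p n : E) (δ : ℝ), 0 < δ → ‖n‖ = 1 → p ∈ frontier D →
      ‖p - x‖ < r0 → ball (p + (δ:ℂ) • n) δ ⊆ D → ConeProp D p n C r0 ε := by
  obtain ⟨W, ρ, M, hM, ⟨hW, hxW, hC1, hne, hDW, hfW⟩, hHol⟩ := hbd x hx
  have hcont : ContinuousOn (fun y => fderiv ℝ ρ y) W := hC1.continuousOn_fderiv_of_isOpen hW le_rfl
  have hxn : 0 < ‖fderiv ℝ ρ x‖ := norm_pos_iff.2 (hne x hxW)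
  have hev : ∀ᶠ y in 𝓝 x, y ∈ W ∧ ‖fderiv ℝ ρ x‖ / 2 < ‖fderiv ℝ ρ y‖ :=
    Filter.Eventually.and (hW.mem_nhds hxW : ∀ᶠ y in 𝓝 x, y ∈ W) ((((hcont x hxW).continuousAt (hW.mem_nhds hxW)).norm).eventually_const_lt
      (by linarith))
  obtain ⟨r, hr, hball⟩ := Metric.eventually_nhds_iff.1 hev
  refine ⟨M / (‖fderiv ℝ ρ x‖ / 2), r / 2, by positivity, by positivity, ?_⟩
  intro p n δ hδ hn hpf hpx hb y hy hcone
  have hdiff : ∀ y ∈ W, DifferentiableAt ℝ ρ y := fun y hy =>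
    (hC1.differentiableOn one_ne_zero y hy).differentiableAt (hW.mem_nhds hy)
  have hin : closedBall p ‖y - p‖ ⊆ W := by
    intro q hq
    apply (hball _).1
    rw [mem_closedBall] at hq
    have := dist_triangle q p x
    rw [dist_eq_norm p x] at this
    linarith
  have hpW : p ∈ W := hin (mem_closedBall_self (norm_nonneg _))
  have hyW : y ∈ W := hin (by rw [mem_closedBall, dist_eq_norm])
  have hpn : ‖fderiv ℝ ρ x‖ / 2 < ‖fderiv ℝ ρ p‖ := (hball (by rw [dist_eq_norm]; linarith)).2
  have hp0 : ρ p = 0 := by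
    have : p ∈ frontier D ∩ W := ⟨hpf, hpW⟩
    rw [hfW] at this
    exact this.2
  have hρneg : ∀ q ∈ D ∩ W, ρ q < 0 := by
    intro q hq
    rw [hDW] at hq
    exact hq.2
  have hlin := linfun_normal (fderiv ℝ ρ p) n hn
    (fderiv_nonpos D W hW ρ p n δ hδ hpW hb hn hρneg hp0 (hdiff p hpW)) (y - p)
  have hmv := (convex_closedBall p ‖y - p‖).norm_image_sub_le_of_norm_fderiv_le' (𝕜 := ℝ)
    (f := ρ) (φ := fderiv ℝ ρ p) (C := M * ‖y - p‖ ^ ε) (x := p) (y := y)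
    (fun q hq => hdiff q (hin hq)) (by
      intro q hq
      refine (hHol q (hin hq) p hpW).trans ?_
      rw [mem_closedBall, dist_eq_norm] at hq
      gcongr) (mem_closedBall_self (norm_nonneg _)) (by rw [mem_closedBall, dist_eq_norm])
  rw [hp0, sub_zero, hlin] at hmv
  have hup := (abs_le.1 hmv).2
  have hyp0 : 0 < ‖y - p‖ := by
    rw [norm_pos_iff]
    intro h0
    rw [h0, norm_zero, inner_zero_right, Real.zero_rpow (by linarith)] at hcone
    simp at hcone
  have hpow : ‖y - p‖ ^ (1 + ε) = ‖y - p‖ ^ ε * ‖y - p‖ := by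
    rw [add_comm, Real.rpow_add_one hyp0.ne']
  have hrpos : 0 < (inner ℂ n (y - p)).re := lt_of_le_of_lt (by positivity) hcone
  have hfin : ρ y < 0 := by
    rw [hpow, div_mul_eq_mul_div, div_lt_iff₀ (by positivity)] at hcone
    have : ‖fderiv ℝ ρ x‖ / 2 * (inner ℂ n (y - p)).re ≤ ‖fderiv ℝ ρ p‖ * (inner ℂ n (y - p)).re :=
      mul_le_mul_of_nonneg_right hpn.le hrpos.le
    nlinarith
  have : y ∈ D ∩ W := by rw [hDW]; exact ⟨hyW, hfin⟩
  exact this.1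

lemma exists_t0 (C r0 ε : ℝ) (_hC : 0 < C) (hr0 : 0 < r0) (hε : 0 < ε) :
    ∃ t0 : ℝ, 0 < t0 ∧ ∀ u ∈ Ioc 0 t0, u ≤ 1 ∧ 3 * u ^ ((1 + ε/2)/(1+ε)) < r0 ∧
      C * 3 ^ (1+ε) * u ^ (ε/2) ≤ 1/2 := by
  have key : ∀ b : ℝ, 0 < b → ∀ k : ℝ, Tendsto (fun u : ℝ => k * u ^ b) (𝓝[>] 0) (𝓝 0) := by
    intro b hb k
    have h1 : ContinuousAt (fun u : ℝ => k * u ^ b) 0 :=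
      continuousAt_const.mul (Real.continuousAt_rpow_const 0 b (Or.inr hb.le))
    have h2 : Tendsto (fun u : ℝ => k * u ^ b) (𝓝 0) (𝓝 (k * 0 ^ b)) := h1
    rw [Real.zero_rpow hb.ne', mul_zero] at h2
    exact h2.mono_left nhdsWithin_le_nhds
  have e1 := (key ((1 + ε/2)/(1+ε)) (by positivity) 3).eventually_lt_const hr0
  have e2 := (key (ε/2) (by positivity) (C * 3 ^ (1+ε))).eventually_lt_const
    (show (0:ℝ) < 1/2 by norm_num)
  have e3 : ∀ᶠ u : ℝ in 𝓝[>] 0, u ≤ 1 :=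
    nhdsWithin_le_nhds (Iic_mem_nhds one_pos)
  have e4 : {u : ℝ | u ≤ 1 ∧ 3 * u ^ ((1 + ε/2)/(1+ε)) < r0 ∧
      C * 3 ^ (1+ε) * u ^ (ε/2) ≤ 1/2} ∈ 𝓝[>] (0:ℝ) := by
    filter_upwards [e1, e2, e3] with u h1 h2 h3
    exact ⟨h3, h1, h2.le⟩
  obtain ⟨t0, ht0, hsub⟩ := mem_nhdsGT_iff_exists_Ioc_subset.1 e4
  exact ⟨t0, ht0, fun u hu => hsub hu⟩

lemma cone_bounds (D : Set E) (p n : E) (C r0 ε : ℝ) (hn : ‖n‖ = 1) (hC : 0 < C)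
    (hε : 0 < ε) (hcone : ConeProp D p n C r0 ε) (u : ℝ) (hu0 : 0 < u) (hu1 : u ≤ 1)
    (hu2 : 3 * u ^ ((1 + ε/2)/(1+ε)) < r0) (hu3 : C * 3 ^ (1+ε) * u ^ (ε/2) ≤ 1/2) :
    ball (p + (u:ℂ) • n) (u/4) ⊆ D ∧
    kobMetric D (p + (u:ℂ) • n) n ≤ 1/2 * u⁻¹ + C * 3 ^ (1+ε) * u ^ (ε/2 - 1)
      + 1/2 * u ^ (-((1 + ε/2)/(1+ε))) := by
  set β : ℝ := (1 + ε/2)/(1+ε) with hβ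
  set K : ℝ := C * 3 ^ (1+ε) with hK
  have hKpos : 0 < K := by positivity
  have hβ1 : β ≤ 1 := by rw [hβ, div_le_one (by positivity)]; linarith
  have hβ0 : 0 < β := by positivity
  set R : ℝ := u ^ β with hR
  have hRu : u ≤ R := by
    have := Real.rpow_le_rpow_of_exponent_ge hu0 hu1 hβ1
    rwa [Real.rpow_one] at this
  have hRpos : 0 < R := by positivity
  have hR3 : C * (3 * R) ^ (1 + ε) = K * u ^ (1 + ε/2) := by
    rw [Real.mul_rpow (by norm_num) hRpos.le, hR, ← Real.rpow_mul hu0.le]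
    have : β * (1 + ε) = 1 + ε/2 := by rw [hβ]; field_simp
    rw [this, hK]; ring
  set a : ℝ := K * u ^ (1 + ε/2) with ha
  have ha' : a = u * (K * u ^ (ε/2)) := by
    rw [ha, Real.rpow_add hu0, Real.rpow_one]; ring
  have ha0 : 0 < a := by positivity
  have hau : a ≤ u / 2 := by rw [ha']; nlinarith
  have hCn : ∀ s : ℝ, 0 ≤ s → s ≤ 3 * R → C * s ^ (1 + ε) ≤ a := by
    intro s hs0 hs
    rw [← hR3]
    gcongr
  constructor
  · intro y hy
    rw [mem_ball, dist_eq_norm] at hy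
    set s : E := y - (p + (u:ℂ) • n) with hs
    have hyp : y - p = (u:ℂ) • n + s := by rw [hs]; abel
    have hun : ‖(u:ℂ) • n‖ = u := by
      rw [norm_smul, hn, Complex.norm_real, Real.norm_eq_abs, abs_of_pos hu0, mul_one]
    have hnorm : ‖y - p‖ ≤ 2 * u := by
      rw [hyp]
      refine (norm_add_le _ _).trans ?_
      rw [hun]; linarith
    apply hcone
    · linarith
    · refine (hCn _ (norm_nonneg _) (by linarith)).trans_lt ?_
      rw [hyp, inner_add_right, Complex.add_re, re_inner_unit n hn, Complex.ofReal_re]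
      have h1 : |(inner ℂ n s).re| ≤ ‖s‖ := by
        refine (Complex.abs_re_le_norm _).trans ((norm_inner_le_norm _ _).trans ?_)
        rw [hn, one_mul]
      have := (abs_le.1 h1).1
      linarith
  · have hdisc := kobMetric_le_disc D p n (a + R) u R (by rw [abs_lt]; constructor <;> linarith) (by
      intro ζ hζ
      have hre : a < ζ.re := by
        have h1 := Complex.abs_re_le_norm (ζ - ((a + R : ℝ) : ℂ))
        rw [Complex.sub_re, Complex.ofReal_re] at h1
        have := (abs_le.1 h1).1
        linarith
      have hno : ‖ζ‖ ≤ 3 * R := by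
        have h1 := norm_le_norm_sub_add ζ ((a + R : ℝ) : ℂ)
        rw [Complex.norm_real, Real.norm_eq_abs, abs_of_pos (by positivity)] at h1
        linarith
      have hz : ‖ζ • n‖ = ‖ζ‖ := by rw [norm_smul, hn, mul_one]
      apply hcone
      · rw [add_sub_cancel_left, hz]; linarith
      · rw [add_sub_cancel_left, hz, re_inner_unit n hn]
        exact (hCn _ (norm_nonneg _) hno).trans_lt hre)
    refine hdisc.trans ?_
    set X : ℝ := u - a with hX
    have hX1 : u / 2 ≤ X := by linarith
    have hXpos : 0 < X := by linarith
    have hRX : R ≤ 2 * R - X := by linarith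
    have e1 : R / (R ^ 2 - (u - (a + R)) ^ 2) = 1/2 * X⁻¹ + 1/2 * (2 * R - X)⁻¹ := by
      have : R ^ 2 - (u - (a + R)) ^ 2 = X * (2 * R - X) := by rw [hX]; ring
      rw [this]
      obtain ⟨Y, hY⟩ : ∃ Y, Y = 2 * R - X := ⟨_, rfl⟩
      have hYpos : 0 < Y := by linarith
      have hRY : R = (X + Y) / 2 := by linarith
      rw [← hY, hRY]
      have hXne := hXpos.ne'
      have hYne := hYpos.ne'
      generalize X = X' at hXne
      field_simp
      ring
    have e2 : (2 * R - X)⁻¹ ≤ u ^ (-β) := by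
      rw [Real.rpow_neg hu0.le]
      exact inv_anti₀ hRpos hRX
    have e3 : X⁻¹ ≤ u⁻¹ + 2 * (K * u ^ (ε/2 - 1)) := by
      have h1 : K * u ^ (ε/2 - 1) = a / u^2 := by
        rw [ha', Real.rpow_sub_one hu0.ne']; field_simp
      rw [h1]
      have h2 : X⁻¹ = u⁻¹ + a / (X * u) := by
        rw [hX] at hXpos ⊢
        field_simp
        ring
      rw [h2]
      have h3 : a / (X * u) ≤ 2 * (a / u^2) := by
        rw [← mul_div_assoc, div_le_div_iff₀ (by positivity) (by positivity)]
        have : u * u ≤ 2 * (X * u) := by nlinarith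
        nlinarith
      linarith
    rw [e1]
    linarith

/-- upper bound along a normal -/
lemma kobDist_normal_le [CompleteSpace E] (C r0 ε : ℝ) (hC : 0 < C) (hr0 : 0 < r0) (hε : 0 < ε) :
    ∃ t0 A : ℝ, 0 < t0 ∧ ∀ (D : Set E) (p n : E), ‖n‖ = 1 → ConeProp D p n C r0 ε →
      ∀ δ t : ℝ, 0 < δ → δ ≤ t → t ≤ t0 → ball (p + (t:ℂ) • n) (t/4) ⊆ D ∧
      kobDist D (p + (δ:ℂ) • n) (p + (t:ℂ) • n) ≤ 1/2 * (Real.log t - Real.log δ) + A := by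
  obtain ⟨t0, ht0, H⟩ := exists_t0 C r0 ε hC hr0 hε
  set β : ℝ := (1 + ε/2)/(1+ε) with hβ
  set K : ℝ := C * 3 ^ (1+ε) with hK
  have hKpos : 0 < K := by positivity
  have hβ1 : β < 1 := by rw [hβ, div_lt_one (by positivity)]; linarith
  refine ⟨t0, K / (ε/2) + 1/2 * (1 / (1 - β)), ht0, ?_⟩
  intro D p n hn hcone δ t hδ hδt ht
  have htpos : 0 < t := hδ.trans_le hδt
  have hB : ∀ u ∈ Icc δ t, ball (p + (u:ℂ) • n) (u/4) ⊆ D ∧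
    kobMetric D (p + (u:ℂ) • n) n ≤ 1/2 * u⁻¹ + K * u ^ (ε/2 - 1) + 1/2 * u ^ (-β) := by
    intro u hu
    have hu0 : 0 < u := hδ.trans_le hu.1
    obtain ⟨h1, h2, h3⟩ := H u ⟨hu0, hu.2.trans ht⟩
    exact cone_bounds D p n C r0 ε hn hC hε hcone u hu0 h1 h2 h3
  refine ⟨(hB t ⟨hδt, le_rfl⟩).1, ?_⟩
  have h0 : (0:ℝ) ∉ uIcc δ t := by
    rw [uIcc_of_le hδt]; intro h; linarith [h.1]
  have i1 : IntervalIntegrable (fun u : ℝ => 1/2 * u⁻¹) volume δ t :=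
    (intervalIntegrable_inv_iff.2 (Or.inr h0)).const_mul _
  have i2 : IntervalIntegrable (fun u : ℝ => K * u ^ (ε/2 - 1)) volume δ t :=
    (intervalIntegral.intervalIntegrable_rpow (Or.inr h0)).const_mul _
  have i3 : IntervalIntegrable (fun u : ℝ => 1/2 * u ^ (-β)) volume δ t :=
    (intervalIntegral.intervalIntegrable_rpow (Or.inr h0)).const_mul _
  have hle := kobDist_le_of_line D p n δ t hδt
    (fun u => 1/2 * u⁻¹ + K * u ^ (ε/2 - 1) + 1/2 * u ^ (-β)) ((i1.add i2).add i3)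
    (fun u hu => (hB u hu).1 (mem_ball_self (by linarith [hu.1]))) (fun u hu => (hB u hu).2)
  refine hle.trans ?_
  rw [intervalIntegral.integral_add (i1.add i2) i3, intervalIntegral.integral_add i1 i2,
    intervalIntegral.integral_const_mul, intervalIntegral.integral_const_mul,
    intervalIntegral.integral_const_mul, integral_inv h0,
    integral_rpow (Or.inl (by linarith)), integral_rpow (Or.inl (by linarith)),
    Real.log_div htpos.ne' hδ.ne']
  have ht1 : t ≤ 1 := (H t ⟨htpos, ht⟩).1
  have q1 : (t ^ (ε/2 - 1 + 1) - δ ^ (ε/2 - 1 + 1)) / (ε/2 - 1 + 1) ≤ 1 / (ε/2) := by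
    rw [sub_add_cancel]
    have := Real.rpow_le_one htpos.le ht1 (show 0 ≤ ε/2 by linarith)
    have := Real.rpow_nonneg hδ.le (ε/2)
    gcongr
    linarith
  have q2 : (t ^ (-β + 1) - δ ^ (-β + 1)) / (-β + 1) ≤ 1 / (1 - β) := by
    rw [neg_add_eq_sub]
    have := Real.rpow_le_one htpos.le ht1 (show 0 ≤ 1 - β by linarith)
    have := Real.rpow_nonneg hδ.le (1 - β)
    have : 0 < 1 - β := by linarith
    gcongr
    linarith
  have q3 := mul_le_mul_of_nonneg_left q1 hKpos.le
  rw [mul_one_div] at q3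
  linarith

lemma kobDist_close [CompleteSpace E] (D : Set E) (hc : Convex ℝ D) (x y : E) (r : ℝ) (hr : 0 < r)
    (hx : ball x r ⊆ D) (hy : ball y r ⊆ D) : kobDist D x y ≤ ‖y - x‖ / r := by
  have hb : ∀ t ∈ Icc (0:ℝ) 1, ball (x + (t:ℂ) • (y - x)) r ⊆ D := by
    intro t ht q hq
    rw [mem_ball, dist_eq_norm] at hq
    set s := q - (x + (t:ℂ) • (y - x)) with hs
    have h1 : x + s ∈ D := hx (by rw [mem_ball, dist_eq_norm, add_sub_cancel_left]; exact hq)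
    have h2 : y + s ∈ D := hy (by rw [mem_ball, dist_eq_norm, add_sub_cancel_left]; exact hq)
    have h3 := hc.add_smul_sub_mem h1 h2 ht
    have h4 : x + s + t • (y + s - (x + s)) = q := by
      rw [add_sub_add_right_eq_sub, ← Complex.coe_smul, hs]; abel
    rwa [h4] at h3
  have := kobDist_le_of_line D x (y - x) 0 1 zero_le_one (fun _ => ‖y - x‖ / r)
    intervalIntegrable_const (fun t ht => hb t ht (mem_ball_self hr))
    (fun t ht => kobMetric_le_ball D _ _ r hr (hb t ht))
  simpa using this

end Geometry

section Final

variable {E : Type*} [NormedAddCommGroup E] [InnerProductSpace ℂ E]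

/-- The normal foot-point data of a point close to the boundary point `x`. -/
lemma exists_foot [ProperSpace E] (D : Set E) (hD : IsOpen D) (z x : E) (hz : z ∈ D)
    (hx : x ∈ frontier D) :
    ∃ (p n : E) (δ : ℝ), 0 < δ ∧ ‖n‖ = 1 ∧ p ∈ frontier D ∧ p ∉ D ∧ z = p + (δ:ℂ) • n ∧
      δ = ‖z - p‖ ∧ δ ≤ ‖z - x‖ ∧ ‖p - x‖ ≤ 2 * ‖z - x‖ ∧ ball (p + (δ:ℂ) • n) δ ⊆ D := by
  have hxD : x ∉ D := by
    rw [hD.frontier_eq] at hx; exact hx.2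
  obtain ⟨p, hp, hle, hball⟩ := exists_nearest D hD z x hz hx
  have hpD : p ∉ D := by
    have h := hp
    rw [hD.frontier_eq] at h; exact h.2
  have hne : z - p ≠ 0 := by
    intro h
    rw [sub_eq_zero] at h
    exact hpD (h ▸ hz)
  have hδ : 0 < ‖z - p‖ := norm_pos_iff.2 hne
  have hδc : ((‖z - p‖ : ℝ) : ℂ) ≠ 0 := by exact_mod_cast hδ.ne'
  have hzeq : z = p + ((‖z - p‖ : ℝ) : ℂ) • (((‖z - p‖ : ℝ) : ℂ)⁻¹ • (z - p)) := by
    rw [smul_inv_smul₀ hδc]; abel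
  refine ⟨p, ((‖z - p‖ : ℝ) : ℂ)⁻¹ • (z - p), ‖z - p‖, hδ, ?_, hp, hpD, hzeq, rfl, hle, ?_, ?_⟩
  · rw [norm_smul, norm_inv, Complex.norm_real, norm_norm, inv_mul_cancel₀ hδ.ne']
  · have h1 : p - x = (z - x) - (z - p) := by abel
    rw [h1]
    exact (norm_sub_le _ _).trans (by linarith)
  · rw [← hzeq]; exact hball

lemma gromov_final [ProperSpace E] [MeasurableSpace E] [BorelSpace E] [SecondCountableTopology E]
    (D : Set E) (hD : IsOpen D) (hc : Convex ℝ D) (ε : ℝ) (hε : 0 < ε)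
    (hbd : HolderC1Boundary D ε) (o : E) (ho : o ∈ D)
    (x : E) (hx : x ∈ frontier D) (B : ℝ) :
    ∃ r : ℝ, 0 < r ∧ ∀ z ∈ D, ∀ w ∈ D, ‖z - x‖ < r → ‖w - x‖ < r → B ≤ gromovProd D o z w := by
  obtain ⟨C, r0, hC, hr0, hcone⟩ := exists_cone D ε hε hbd x hx
  obtain ⟨t0, A, ht0, hN⟩ := kobDist_normal_le (E := E) C r0 ε hC hr0 hε
  obtain ⟨ro, hro, hball⟩ := Metric.isOpen_iff.1 hD o ho
  set t : ℝ := min t0 (Real.exp (Real.log ro - 2 * A - 12 - 2 * B)) with ht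
  have htpos : 0 < t := lt_min ht0 (Real.exp_pos _)
  have htlog : Real.log t ≤ Real.log ro - 2 * A - 12 - 2 * B := by
    rw [Real.log_le_iff_le_exp htpos]; exact min_le_right _ _
  refine ⟨min (t / 4) (r0 / 2), by positivity, ?_⟩
  intro z hz w hw hzx hwx
  have hz1 := hzx.trans_le (min_le_left _ _)
  have hz2 := hzx.trans_le (min_le_right _ _)
  have hw1 := hwx.trans_le (min_le_left _ _)
  have hw2 := hwx.trans_le (min_le_right _ _)
  obtain ⟨p, n, δ, hδ, hn, hpf, hpD, hzeq, hδeq, hδle, hpx, hpb⟩ := exists_foot D hD z x hz hx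
  obtain ⟨q, m, η, hη, hm, hqf, hqD, hweq, hηeq, hηle, hqx, hqb⟩ := exists_foot D hD w x hw hx
  obtain ⟨hb1, hk1⟩ := hN D p n hn (hcone p n δ hδ hn hpf (by linarith) hpb) δ t hδ (by linarith)
    (min_le_left _ _)
  obtain ⟨hb2, hk2⟩ := hN D q m hm (hcone q m η hη hm hqf (by linarith) hqb) η t hη (by linarith)
    (min_le_left _ _)
  rw [← hzeq] at hk1
  rw [← hweq] at hk2
  have ht4 : 0 < t / 4 := by positivity
  have hz' := hb1 (mem_ball_self ht4)
  have hw' := hb2 (mem_ball_self ht4)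
  have hcl := kobDist_close D hc _ _ (t/4) ht4 hb1 hb2
  have hnt : ∀ v : E, ‖v‖ = 1 → ‖(t:ℂ) • v‖ = t := by
    intro v hv
    rw [norm_smul, hv, Complex.norm_real, Real.norm_eq_abs, abs_of_pos htpos, mul_one]
  have hdist : ‖(q + (t:ℂ) • m) - (p + (t:ℂ) • n)‖ ≤ 3 * t := by
    have h1 : (q + (t:ℂ) • m) - (p + (t:ℂ) • n) = ((q - x) - (p - x)) + ((t:ℂ) • m - (t:ℂ) • n) := by
      abel
    rw [h1]
    have h2 := norm_add_le ((q - x) - (p - x)) ((t:ℂ) • m - (t:ℂ) • n)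
    have h3 := norm_sub_le (q - x) (p - x)
    have h4 := norm_sub_le ((t:ℂ) • m) ((t:ℂ) • n)
    rw [hnt m hm, hnt n hn] at h4
    linarith
  have hcl2 : kobDist D (p + (t:ℂ) • n) (q + (t:ℂ) • m) ≤ 12 := by
    refine hcl.trans ?_
    rw [div_le_iff₀ ht4]; linarith
  have T1 := kobDist_triangle D hD hc z (p + (t:ℂ) • n) w hz hz' hw
  have T2 := kobDist_triangle D hD hc (p + (t:ℂ) • n) (q + (t:ℂ) • m) w hz' hw' hw
  have S := kobDist_symm D (q + (t:ℂ) • m) w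
  have S2 := kobDist_symm D o w
  have S3 := kobDist_symm D o z
  have L1 := kobDist_lower_dist D hD hc o z p ro hro hball hz hpD
  have L2 := kobDist_lower_dist D hD hc o w q ro hro hball hw hqD
  rw [← hδeq] at L1
  rw [← hηeq] at L2
  unfold gromovProd
  linarith

end Final

theorem statement_18 {n : ℕ}
    (Ω : Set (EuclideanSpace ℂ (Fin n)))
    (hΩo : IsOpen Ω) (hne : Ω.Nonempty) (hΩb : Bornology.IsBounded Ω)
    (hconv : Convex ℝ Ω)
    (ε : ℝ) (hε : 0 < ε) (hbd : HolderC1Boundary Ω ε)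
    (o : EuclideanSpace ℂ (Fin n)) (ho : o ∈ Ω)
    (z w : ℕ → EuclideanSpace ℂ (Fin n)) (hz : ∀ k, z k ∈ Ω) (hw : ∀ m, w m ∈ Ω)
    (x : EuclideanSpace ℂ (Fin n)) (hx : x ∈ frontier Ω)
    (hzlim : Tendsto z atTop (𝓝 x)) (hwlim : Tendsto w atTop (𝓝 x)) :
    Tendsto (fun p : ℕ × ℕ => gromovProd Ω o (z p.1) (w p.2)) atTop atTop := by

  rw [Filter.tendsto_atTop]
  intro B
  obtain ⟨r, hr, H⟩ := gromov_final Ω hΩo hconv ε hε hbd o ho x hx B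
  have h1 : ∀ᶠ k in atTop, ‖z k - x‖ < r := by
    filter_upwards [hzlim.eventually (Metric.ball_mem_nhds x hr)] with k hk
    rwa [dist_eq_norm] at hk
  have h2 : ∀ᶠ k in atTop, ‖w k - x‖ < r := by
    filter_upwards [hwlim.eventually (Metric.ball_mem_nhds x hr)] with k hk
    rwa [dist_eq_norm] at hk
  rw [← prod_atTop_atTop_eq]
  filter_upwards [h1.prod_mk h2] with k hk
  exact H _ (hz _) _ (hw _) hk.1 hk.2
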